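/- Let p_1 < p_2 < p_3 < ... denote the sequence of all prime numbers and let k ≥ 0 be an integer. Then the limit as N → ∞ of (∑_{i=1}^N p_i^k · φ(p_i − 1)) / (∑_{i=1}^N p_i^k · (p_i − 1)) exists and equals Artin's constant A = ∏_p (1 − 1/(p(p−1))). -/

import Mathlib

open Filter

/-- Artin's constant `A = ∏_p (1 - 1/(p(p-1)))`, product over all primes. -/
noncomputable def artinConstant : ℝ :=
  ∏' p : Nat.Primes, (1 - 1 / (((p : ℕ) : ℝ) * (((p : ℕ) : ℝ) - 1)))

open Filter

section Kernel
open MeasureTheory Set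

/-- Fejer-type kernel. -/
noncomputable def fejK (l v : ℝ) : ℝ := ∫ t in (0:ℝ)..l, (1 - t / l) * Real.cos (t * v)

lemma fejK_eq {l v : ℝ} (hl : 0 < l) (hv : v ≠ 0) :
    fejK l v = (1 - Real.cos (l * v)) / (l * v ^ 2) := by
  unfold fejK
  have h : ∀ t ∈ uIcc (0:ℝ) l, HasDerivAt
      (fun t => (1 - t / l) * (Real.sin (t * v) / v) - Real.cos (t * v) / (l * v ^ 2))
      ((1 - t / l) * Real.cos (t * v)) t := by
    intro t _
    have h1 : HasDerivAt (fun t : ℝ => t * v) v t := by simpa using (hasDerivAt_id t).mul_const v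
    have h2 : HasDerivAt (fun t : ℝ => 1 - t / l) (-(1 / l)) t := by
      simpa using ((hasDerivAt_id t).div_const l).const_sub 1
    have := (h2.mul (h1.sin.div_const v)).sub (h1.cos.div_const (l * v ^ 2))
    refine this.congr_deriv ?_
    field_simp
    ring
  rw [intervalIntegral.integral_eq_sub_of_hasDerivAt h]
  · have := hl.ne'
    simp
    field_simp
    ring
  · apply Continuous.intervalIntegrable
    fun_prop

lemma fejK_nonneg {l : ℝ} (hl : 0 < l) (v : ℝ) : 0 ≤ fejK l v := by
  rcases eq_or_ne v 0 with rfl | hv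
  · unfold fejK
    apply intervalIntegral.integral_nonneg hl.le
    intro t ht
    have : t / l ≤ 1 := (div_le_one hl).2 ht.2
    simp [this]
  · rw [fejK_eq hl hv]
    have := Real.cos_le_one (l * v)
    apply div_nonneg <;> [linarith; positivity]

lemma fejK_le {l : ℝ} (hl : 0 < l) (v : ℝ) : fejK l v ≤ l := by
  have : ‖fejK l v‖ ≤ 1 * |l - 0| := by
    unfold fejK
    apply intervalIntegral.norm_integral_le_of_norm_le_const
    intro t ht
    rw [uIoc_of_le hl.le] at ht
    have h1 : t / l ≤ 1 := (div_le_one hl).2 ht.2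
    have h2 : 0 ≤ t / l := div_nonneg ht.1.le hl.le
    rw [norm_mul]
    have h3 : ‖1 - t / l‖ ≤ 1 := by rw [Real.norm_eq_abs, abs_le]; constructor <;> linarith
    have h4 : ‖Real.cos (t * v)‖ ≤ 1 := Real.abs_cos_le_one _
    exact mul_le_one₀ h3 (norm_nonneg _) h4
  have h := (le_abs_self _).trans this
  simpa [abs_of_pos hl] using h

lemma fejK_le' {l : ℝ} (hl : 0 < l) (v : ℝ) : fejK l v * v ^ 2 ≤ 2 / l := by
  rcases eq_or_ne v 0 with rfl | hv
  · simp; positivity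
  · rw [fejK_eq hl hv]
    have h1 : (1 - Real.cos (l * v)) / (l * v ^ 2) * v ^ 2 = (1 - Real.cos (l * v)) / l := by
      field_simp
    rw [h1]
    have := Real.neg_one_le_cos (l * v)
    gcongr
    linarith

lemma fejK_ge {l v : ℝ} (hl : 0 < l) (hv : |v| ≤ 1 / l) : l / 4 ≤ fejK l v := by
  have hi : ∫ t in (0:ℝ)..l, (1 - t / l) * (1 / 2) = l / 4 := by
    rw [intervalIntegral.integral_mul_const, intervalIntegral.integral_sub (by simp)
      (by apply Continuous.intervalIntegrable; fun_prop)]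
    simp
    field_simp
    norm_num
  rw [← hi]
  unfold fejK
  apply intervalIntegral.integral_mono_on hl.le
  · apply Continuous.intervalIntegrable; fun_prop
  · apply Continuous.intervalIntegrable; fun_prop
  intro t ht
  have h1 : t / l ≤ 1 := (div_le_one hl).2 ht.2
  have h2 : 1 / 2 ≤ Real.cos (t * v) := by
    have h3 := Real.one_sub_sq_div_two_le_cos (x := t * v)
    have h4 : |t * v| ≤ 1 := by
      rw [abs_mul, abs_of_nonneg ht.1]
      calc t * |v| ≤ l * (1 / l) := by
            apply mul_le_mul ht.2 hv (abs_nonneg _) hl.le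
        _ = 1 := by field_simp
    have h5 : (t * v) ^ 2 ≤ 1 := by
      rw [← sq_abs]; exact pow_le_one₀ (abs_nonneg _) h4
    linarith
  apply mul_le_mul_of_nonneg_left h2
  linarith

lemma fejK_bound {l : ℝ} (hl : 0 < l) (v : ℝ) : fejK l v ≤ (l + 2 / l) * (1 + v ^ 2)⁻¹ := by
  rw [← div_eq_mul_inv, le_div_iff₀ (by positivity)]
  have := fejK_le hl v
  have := fejK_le' hl v
  linarith

lemma fejK_continuous (l : ℝ) : Continuous (fejK l) := by
  unfold fejK
  apply intervalIntegral.continuous_parametric_intervalIntegral_of_continuous' (by fun_prop)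

lemma fejK_integrable {l : ℝ} (hl : 0 < l) (y : ℝ) : Integrable (fun u => fejK l (u - y)) := by
  have h0 : Integrable (fejK l) := by
    refine Integrable.mono' (integrable_inv_one_add_sq.const_mul (l + 2 / l))
      (fejK_continuous l).aestronglyMeasurable (ae_of_all _ fun v => ?_)
    rw [Real.norm_of_nonneg (fejK_nonneg hl v)]
    exact fejK_bound hl v
  exact h0.comp_sub_right y

lemma window {h : ℝ → ℝ} {B : ℝ} (hm : Measurable h) (hB : ∀ u, |h u| ≤ B)
    (hI : ∀ l : ℝ, 0 < l → Tendsto (fun y => ∫ u in Ioi (0:ℝ), h u * fejK l (u - y)) atTop (nhds 0))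
    {ε η : ℝ} (hε : 0 < ε) (hη : 0 < η) :
    ∃ Y, ∀ y ≥ Y, ¬ (∀ u, |u - y| ≤ η → ε ≤ h u) := by
  have hB0 : 0 ≤ B := (abs_nonneg _).trans (hB 0)
  set B' := B * 2 * (1 + 1 / η ^ 2) with hB'
  have hB'0 : 0 ≤ B' := by positivity
  obtain ⟨l, hl0, hl1, hl2⟩ : ∃ l : ℝ, 0 < l ∧ 1 / l ≤ η ∧ B' * Real.pi / l < ε / 4 := by
    refine ⟨1 / η + 8 * (B' * Real.pi) / ε, by positivity, ?_, ?_⟩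
    · rw [div_le_iff₀ (by positivity)]
      have : η * (1 / η) = 1 := by field_simp
      have h2 : 0 ≤ η * (8 * (B' * Real.pi) / ε) := by positivity
      linarith
    · rw [div_lt_iff₀ (by positivity)]
      have : ε / 4 * (1 / η + 8 * (B' * Real.pi) / ε) = ε / (4 * η) + 2 * (B' * Real.pi) := by
        field_simp
        ring
      rw [this]
      have h2 : 0 < ε / (4 * η) := by positivity
      have h3 : 0 ≤ B' * Real.pi := by positivity
      linarith
  have hev := (hI l hl0).eventually (gt_mem_nhds (show (0:ℝ) < ε / 4 by positivity))
  obtain ⟨Y, hY⟩ := eventually_atTop.1 hev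
  refine ⟨max Y (2 * η), fun y hy hcon => ?_⟩
  have hy1 := hY y ((le_max_left _ _).trans hy)
  have hy2 : 2 * η ≤ y := (le_max_right _ _).trans hy
  -- lower bound
  set J : Set ℝ := Icc (y - 1 / l) (y + 1 / l)
  have hpt : ∀ u, J.indicator (fun _ => ε * l / 4) u - B' / l * (1 + (u - y) ^ 2)⁻¹
      ≤ h u * fejK l (u - y) := by
    intro u
    have hk := fejK_nonneg hl0 (u - y)
    have hpos : 0 ≤ B' / l * (1 + (u - y) ^ 2)⁻¹ := by positivity
    by_cases hu : |u - y| ≤ η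
    · have h1 := hcon u hu
      have h2 : J.indicator (fun _ => ε * l / 4) u ≤ ε * fejK l (u - y) := by
        by_cases hJ : u ∈ J
        · rw [indicator_of_mem hJ]
          have : |u - y| ≤ 1 / l := by
            rw [abs_le]; constructor <;> linarith [hJ.1, hJ.2]
          have := fejK_ge hl0 this
          nlinarith
        · rw [indicator_of_notMem hJ]; positivity
      nlinarith
    · have hJ : u ∉ J := by
        intro hJ
        apply hu
        refine le_trans ?_ hl1
        rw [abs_le]; constructor <;> linarith [hJ.1, hJ.2]
      rw [indicator_of_notMem hJ]
      push Not at hu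
      have h3 : η ^ 2 ≤ (u - y) ^ 2 := by
        rw [← sq_abs (u - y)]; gcongr
      have h4 : fejK l (u - y) ≤ 2 * (1 + 1 / η ^ 2) / l * (1 + (u - y) ^ 2)⁻¹ := by
        rw [← div_eq_mul_inv, le_div_iff₀ (by positivity)]
        have h5 := fejK_le' hl0 (u - y)
        have h6 : fejK l (u - y) * 1 ≤ fejK l (u - y) * ((u - y) ^ 2 / η ^ 2) := by
          gcongr
          rw [one_le_div (by positivity)]; exact h3
        have h7 : fejK l (u - y) * ((u - y) ^ 2 / η ^ 2) ≤ 2 / l * (1 / η ^ 2) := by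
          calc _ = (fejK l (u - y) * (u - y) ^ 2) * (1 / η ^ 2) := by ring
            _ ≤ _ := by gcongr
        calc fejK l (u - y) * (1 + (u - y) ^ 2)
            = fejK l (u - y) * 1 + fejK l (u - y) * (u - y) ^ 2 := by ring
          _ ≤ 2 / l * (1 / η ^ 2) + 2 / l := by linarith
          _ = _ := by ring
      have h8 : -B ≤ h u := (abs_le.1 (hB u)).1
      have h9 : B * fejK l (u - y) ≤ B' / l * (1 + (u - y) ^ 2)⁻¹ := by
        calc _ ≤ B * (2 * (1 + 1 / η ^ 2) / l * (1 + (u - y) ^ 2)⁻¹) := by gcongr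
          _ = _ := by rw [hB']; ring
      nlinarith
  have hint0 : Integrable (fun u : ℝ => (1 + (u - y) ^ 2)⁻¹) :=
    (integrable_inv_one_add_sq).comp_sub_right y
  have hint1 : Integrable (J.indicator (fun _ => ε * l / 4)) := by
    rw [integrable_indicator_iff measurableSet_Icc]
    simp
  have hint2 : Integrable (fun u => h u * fejK l (u - y)) := by
    refine (fejK_integrable hl0 y).bdd_mul (c := B) hm.aestronglyMeasurable (ae_of_all _ ?_)
    intro u; exact hB u
  have hle : ∫ u in Ioi (0:ℝ), (J.indicator (fun _ => ε * l / 4) u - B' / l * (1 + (u - y) ^ 2)⁻¹)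
      ≤ ∫ u in Ioi (0:ℝ), h u * fejK l (u - y) :=
    setIntegral_mono (hint1.sub (hint0.const_mul _)).integrableOn hint2.integrableOn hpt
  rw [integral_sub hint1.integrableOn (hint0.const_mul _).integrableOn] at hle
  have e1 : ∫ u in Ioi (0:ℝ), J.indicator (fun _ => ε * l / 4) u = ε / 2 := by
    rw [setIntegral_indicator measurableSet_Icc]
    have : Ioi (0:ℝ) ∩ J = J := by
      apply inter_eq_right.2
      intro u hu
      have := hu.1
      simp only [mem_Ioi]
      linarith
    rw [this]
    simp only [integral_const, J, smul_eq_mul]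
    rw [measureReal_restrict_apply_univ, Real.volume_real_Icc_of_le]
    · field_simp; ring
    · have : 0 < 1 / l := by positivity
      linarith
  have e2 : ∫ u in Ioi (0:ℝ), B' / l * (1 + (u - y) ^ 2)⁻¹ ≤ B' * Real.pi / l := by
    calc _ ≤ ∫ u, B' / l * (1 + (u - y) ^ 2)⁻¹ := by
          apply setIntegral_le_integral (hint0.const_mul _)
          exact ae_of_all _ fun u => by positivity
      _ = B' / l * ∫ u, (1 + (u - y) ^ 2)⁻¹ := integral_const_mul _ _
      _ = B' / l * Real.pi := by
          rw [integral_sub_right_eq_self (fun u : ℝ => (1 + u ^ 2)⁻¹) y, integral_univ_inv_one_add_sq]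
      _ = _ := by ring
  linarith

end Kernel

open Filter

section Laplace
open MeasureTheory Set

lemma kernel_identity {h : ℝ → ℝ} {B : ℝ} (hm : Measurable h) (hB : ∀ u, |h u| ≤ B) {G : ℂ → ℂ}
    (hL : ∀ s : ℂ, 0 < s.re → ∫ u in Ioi (0:ℝ), (h u : ℂ) * Complex.exp (-s * u) = G s)
    {l : ℝ} (hl : 0 < l) {δ : ℝ} (hδ : 0 < δ) (y : ℝ) :
    ∫ u in Ioi (0:ℝ), h u * Real.exp (-δ * u) * fejK l (u - y) =
      (∫ t in Ioc (0:ℝ) l, ((1 - t / l : ℝ) : ℂ) * Complex.exp (Complex.I * t * y) *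
        G (δ + Complex.I * t)).re := by
  set Φ : ℝ → ℝ → ℂ := fun t u => ((1 - t / l : ℝ) : ℂ) * Complex.exp (Complex.I * t * y) *
        ((h u : ℂ) * Complex.exp (-(δ + Complex.I * t) * u)) with hΦ
  have h1 : ∀ t : ℝ, ((1 - t / l : ℝ) : ℂ) * Complex.exp (Complex.I * t * y) *
        G (δ + Complex.I * t) = ∫ u in Ioi (0:ℝ), Φ t u := by
    intro t
    rw [← hL _ (by simpa using hδ), ← integral_const_mul]
  simp_rw [h1]
  have hre : ∀ t u : ℝ, Φ t u = ((h u * Real.exp (-δ * u) * (1 - t / l) : ℝ) : ℂ) *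
      Complex.exp (((-(t * (u - y)) : ℝ) : ℂ) * Complex.I) := by
    intro t u
    simp only [hΦ]
    push_cast
    have : Complex.exp (-(δ + Complex.I * t) * u) * Complex.exp (Complex.I * t * y)
        = Complex.exp (-δ * u) * Complex.exp (-(t * (u - y)) * Complex.I) := by
      rw [← Complex.exp_add, ← Complex.exp_add]
      congr 1
      ring
    linear_combination (1 - t / l : ℂ) * h u * this
  have hint : Integrable (Function.uncurry Φ)
      ((volume.restrict (Ioc (0:ℝ) l)).prod (volume.restrict (Ioi (0:ℝ)))) := by
    have hb : Integrable (fun z : ℝ × ℝ => (1:ℝ) * (B * Real.exp (-δ * z.2)))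
        ((volume.restrict (Ioc (0:ℝ) l)).prod (volume.restrict (Ioi (0:ℝ)))) := by
      apply Integrable.mul_prod (f := fun _ : ℝ => (1:ℝ)) (g := fun u : ℝ => B * Real.exp (-δ * u))
      · simp
      · exact (exp_neg_integrableOn_Ioi 0 hδ).const_mul B
    refine Integrable.mono' hb ?_ ?_
    · apply Measurable.aestronglyMeasurable
      simp only [hΦ, Function.uncurry_def]
      fun_prop
    · rw [Measure.prod_restrict]
      refine (ae_restrict_mem (measurableSet_Ioc.prod measurableSet_Ioi)).mono ?_
      rintro ⟨t, u⟩ ⟨ht, hu⟩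
      simp only [Function.uncurry_apply_pair]
      rw [hre, norm_mul, Complex.norm_exp_ofReal_mul_I, mul_one, Complex.norm_real, norm_mul,
        norm_mul, Real.norm_eq_abs (Real.exp _), Real.abs_exp, mul_comm]
      have h1 : t / l ≤ 1 := (div_le_one hl).2 ht.2
      have h2 : 0 ≤ t / l := div_nonneg ht.1.le hl.le
      have h3 : ‖1 - t / l‖ ≤ 1 := by rw [Real.norm_eq_abs, abs_le]; constructor <;> linarith
      have h4 : ‖h u‖ ≤ B := hB u
      gcongr
  rw [integral_integral_swap hint]
  have hint2 := hint.integral_prod_right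
  simp only [Function.uncurry_apply_pair] at hint2
  have e : (∫ u in Ioi (0:ℝ), ∫ t in Ioc (0:ℝ) l, Φ t u).re
      = ∫ u in Ioi (0:ℝ), (∫ t in Ioc (0:ℝ) l, Φ t u).re := (integral_re hint2).symm
  rw [e]
  refine setIntegral_congr_fun measurableSet_Ioi fun u _ => ?_
  have hti : Integrable (fun t => Φ t u) (volume.restrict (Ioc (0:ℝ) l)) := by
    rw [← IntegrableOn, ← intervalIntegrable_iff_integrableOn_Ioc_of_le hl.le]
    apply Continuous.intervalIntegrable
    simp only [hΦ]
    fun_prop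
  have e2 : (∫ t in Ioc (0:ℝ) l, Φ t u).re = ∫ t in Ioc (0:ℝ) l, (Φ t u).re :=
    (integral_re hti).symm
  rw [e2, fejK, intervalIntegral.integral_of_le hl.le, ← integral_const_mul]
  refine integral_congr_ae (ae_of_all _ fun t => ?_)
  simp only
  rw [hre, Complex.re_ofReal_mul, Complex.exp_ofReal_mul_I_re, Real.cos_neg]
  ring

lemma kernel_tendsto {h : ℝ → ℝ} {B : ℝ} (hm : Measurable h) (hB : ∀ u, |h u| ≤ B) {G : ℂ → ℂ}
    (hG : ContinuousOn G {s : ℂ | 0 ≤ s.re})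
    (hL : ∀ s : ℂ, 0 < s.re → ∫ u in Ioi (0:ℝ), (h u : ℂ) * Complex.exp (-s * u) = G s)
    {l : ℝ} (hl : 0 < l) :
    Tendsto (fun y => ∫ u in Ioi (0:ℝ), h u * fejK l (u - y)) atTop (nhds 0) := by
  have hkey : ∀ y, ∫ u in Ioi (0:ℝ), h u * fejK l (u - y) =
      (∫ t in Ioc (0:ℝ) l, ((1 - t / l : ℝ) : ℂ) * Complex.exp (Complex.I * t * y) *
        G (Complex.I * t)).re := by
    intro y
    have t1 : Tendsto (fun δ : ℝ => ∫ u in Ioi (0:ℝ), h u * Real.exp (-δ * u) * fejK l (u - y))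
        (nhdsWithin 0 (Ioi 0)) (nhds (∫ u in Ioi (0:ℝ), h u * fejK l (u - y))) := by
      apply tendsto_integral_filter_of_dominated_convergence (fun u => B * fejK l (u - y))
      · refine Eventually.of_forall fun δ => Measurable.aestronglyMeasurable ?_
        have := (fejK_continuous l).measurable
        fun_prop
      · filter_upwards [self_mem_nhdsWithin] with δ hδ
        refine (ae_restrict_mem measurableSet_Ioi).mono fun u hu => ?_
        rw [norm_mul, norm_mul, Real.norm_of_nonneg (fejK_nonneg hl _),
          Real.norm_of_nonneg (Real.exp_pos _).le]
        have : Real.exp (-δ * u) ≤ 1 := by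
          rw [Real.exp_le_one_iff]
          have := mul_pos (mem_Ioi.1 hδ) (mem_Ioi.1 hu)
          linarith
        have h4 : ‖h u‖ ≤ B := hB u
        have h5 := fejK_nonneg hl (u - y)
        calc ‖h u‖ * Real.exp (-δ * u) * fejK l (u - y) ≤ ‖h u‖ * 1 * fejK l (u - y) := by gcongr
          _ ≤ B * fejK l (u - y) := by rw [mul_one]; gcongr
      · exact ((fejK_integrable hl y).const_mul B).integrableOn
      · refine ae_of_all _ fun u => ?_
        have : Continuous (fun δ : ℝ => h u * Real.exp (-δ * u) * fejK l (u - y)) := by fun_prop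
        have := this.tendsto 0
        simp only [neg_zero, zero_mul, Real.exp_zero, mul_one] at this
        exact this.mono_left nhdsWithin_le_nhds
    obtain ⟨C, hC⟩ : ∃ C, ∀ s ∈ (Icc (0:ℝ) 1 ×ℂ Icc (0:ℝ) l), ‖G s‖ ≤ C := by
      apply (isCompact_Icc.reProdIm isCompact_Icc).exists_bound_of_continuousOn
      apply hG.mono
      intro s hs
      exact (Complex.mem_reProdIm.1 hs).1.1
    have t2 : Tendsto (fun δ : ℝ => ∫ t in Ioc (0:ℝ) l, ((1 - t / l : ℝ) : ℂ) *
        Complex.exp (Complex.I * t * y) * G (δ + Complex.I * t)) (nhdsWithin 0 (Ioi 0))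
        (nhds (∫ t in Ioc (0:ℝ) l, ((1 - t / l : ℝ) : ℂ) * Complex.exp (Complex.I * t * y) *
        G (Complex.I * t))) := by
      apply tendsto_integral_filter_of_dominated_convergence (fun _ => C)
      · filter_upwards [self_mem_nhdsWithin] with δ hδ
        apply ContinuousOn.aestronglyMeasurable _ measurableSet_Ioc
        apply ContinuousOn.mul (by fun_prop)
        apply hG.comp (by fun_prop)
        intro t ht
        simpa using (le_of_lt hδ)
      · filter_upwards [self_mem_nhdsWithin, nhdsWithin_le_nhds (gt_mem_nhds zero_lt_one)]
          with δ hδ hδ1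
        refine (ae_restrict_mem measurableSet_Ioc).mono fun t ht => ?_
        rw [norm_mul, norm_mul, Complex.norm_real]
        have h1 : t / l ≤ 1 := (div_le_one hl).2 ht.2
        have h2 : 0 ≤ t / l := div_nonneg ht.1.le hl.le
        have h3 : ‖1 - t / l‖ ≤ 1 := by rw [Real.norm_eq_abs, abs_le]; constructor <;> linarith
        have h4 : ‖Complex.exp (Complex.I * t * y)‖ = 1 := by
          rw [show Complex.I * t * y = ((t * y : ℝ) : ℂ) * Complex.I by push_cast; ring,
            Complex.norm_exp_ofReal_mul_I]
        have h5 : ‖G (δ + Complex.I * t)‖ ≤ C := by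
          apply hC
          rw [Complex.mem_reProdIm]
          simp only [Complex.add_re, Complex.add_im, Complex.ofReal_re, Complex.ofReal_im,
            Complex.mul_re, Complex.mul_im, Complex.I_re, Complex.I_im]
          simp only [zero_mul, mul_zero, one_mul, sub_zero, zero_add, add_zero]
          exact ⟨⟨le_of_lt hδ, hδ1.le⟩, ht.1.le, ht.2⟩
        rw [h4, mul_one]
        calc _ ≤ 1 * C := by gcongr
          _ = C := one_mul _
      · simp
      · refine ae_of_all _ fun t => ?_
        apply Tendsto.const_mul
        have hc := hG (Complex.I * t) (by simp)
        apply hc.tendsto.comp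
        apply tendsto_nhdsWithin_iff.2
        constructor
        · have : Continuous (fun δ : ℝ => (δ : ℂ) + Complex.I * t) := by fun_prop
          have := this.tendsto 0
          simp only [Complex.ofReal_zero, zero_add] at this
          exact this.mono_left nhdsWithin_le_nhds
        · filter_upwards [self_mem_nhdsWithin] with δ hδ
          simpa using (le_of_lt hδ)
    refine tendsto_nhds_unique t1 ?_
    refine (((Complex.continuous_re.tendsto _).comp t2).congr' ?_)
    filter_upwards [self_mem_nhdsWithin] with δ hδ
    exact (kernel_identity hm hB hL hl hδ y).symm
  simp_rw [hkey]
  have hRL := Real.tendsto_integral_exp_smul_cocompact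
    ((Ioc (0:ℝ) l).indicator (fun t : ℝ => ((1 - t / l : ℝ) : ℂ) * G (Complex.I * t)))
  have hcomp : Tendsto (fun y : ℝ => y * (-(1 / (2 * Real.pi)))) atTop (cocompact ℝ) := by
    refine Tendsto.mono_right ?_ atBot_le_cocompact
    apply Tendsto.atTop_mul_const_of_neg _ tendsto_id
    have := Real.pi_pos
    simp; positivity
  have h2 := (Complex.continuous_re.tendsto _).comp (hRL.comp hcomp)
  simp only [Complex.zero_re] at h2
  refine h2.congr fun y => ?_
  simp only [Function.comp_apply]
  congr 1
  rw [← integral_indicator measurableSet_Ioc]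
  congr 1
  ext t
  by_cases ht : t ∈ Ioc (0:ℝ) l
  · rw [indicator_of_mem ht, indicator_of_mem ht, Circle.smul_def, Real.fourierChar_apply, smul_eq_mul]
    have : ((2 * Real.pi * -(t * (y * -(1 / (2 * Real.pi)))) : ℝ) : ℂ) * Complex.I =
        Complex.I * t * y := by
      have := Complex.ofReal_ne_zero.2 Real.pi_ne_zero
      push_cast
      field_simp
    rw [this]
    ring
  · rw [indicator_of_notMem ht, indicator_of_notMem ht, smul_zero]

lemma tauber {h : ℝ → ℝ} {B c : ℝ} (hc : 0 ≤ c) (hm : Measurable h) (hB : ∀ u, |h u| ≤ B)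
    {G : ℂ → ℂ} (hG : ContinuousOn G {s : ℂ | 0 ≤ s.re})
    (hL : ∀ s : ℂ, 0 < s.re → ∫ u in Ioi (0:ℝ), (h u : ℂ) * Complex.exp (-s * u) = G s)
    (hslow : ∀ u v, 0 ≤ u → u ≤ v → (h u + c) ≤ (h v + c) * Real.exp (v - u)) :
    Tendsto h atTop (nhds 0) := by
  have hI := fun (l : ℝ) (hl : 0 < l) => kernel_tendsto hm hB hG hL hl
  rw [Metric.tendsto_nhds]
  intro ε hε
  set κ := (ε / 2) / (ε / 2 + c) with hκ
  have hκ0 : 0 < κ := by positivity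
  set η := Real.log (1 + κ) / 2 with hη
  have hη0 : 0 < η := by
    have := Real.log_pos (show 1 < 1 + κ by linarith)
    positivity
  have hexp : Real.exp (2 * η) = 1 + κ := by
    rw [hη, mul_div_cancel₀ _ (by norm_num), Real.exp_log (by linarith)]
  have hκc : (ε / 2 + c) * κ = ε / 2 := by rw [hκ]; field_simp
  obtain ⟨Y1, hY1⟩ := window hm hB hI (half_pos hε) hη0
  obtain ⟨Y2, hY2⟩ := window (h := fun u => - h u) hm.neg (by simpa using hB)
    (fun l hl => by
      have := (hI l hl).neg
      simp only [neg_zero] at this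
      refine this.congr fun y => ?_
      rw [← integral_neg]
      congr 1; ext u; ring) (half_pos hε) hη0
  filter_upwards [eventually_ge_atTop (max Y1 (max (Y2 + η) (2 * η)))] with y hy
  have hy1 : Y1 ≤ y := (le_max_left _ _).trans hy
  have hy2 : Y2 + η ≤ y := ((le_max_left _ _).trans (le_max_right _ _)).trans hy
  have hy3 : 2 * η ≤ y := ((le_max_right _ _).trans (le_max_right _ _)).trans hy
  rw [Real.dist_eq, sub_zero, abs_lt]
  constructor
  · by_contra hcon
    push Not at hcon
    apply hY2 (y - η) (by linarith)
    intro u hu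
    rw [abs_le] at hu
    have h1 := hslow u y (by linarith) (by linarith)
    rcases le_or_gt 0 (h y + c) with h0 | h0
    · have h2 : Real.exp (y - u) ≤ 1 + κ := by
        rw [← hexp]; apply Real.exp_le_exp.2; linarith
      have h3 : (h y + c) * Real.exp (y - u) ≤ (h y + c) * (1 + κ) := by gcongr
      nlinarith
    · have h2 : 1 ≤ Real.exp (y - u) := Real.one_le_exp (by linarith)
      nlinarith
  · by_contra hcon
    push Not at hcon
    apply hY1 (y + η) (by linarith)
    intro u hu
    rw [abs_le] at hu
    have h1 := hslow y u (by linarith) (by linarith)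
    have h2 : Real.exp (u - y) ≤ 1 + κ := by
      rw [← hexp]; apply Real.exp_le_exp.2; linarith
    have h0 : 0 ≤ h u + c := by
      by_contra h0
      have := mul_neg_of_neg_of_pos (not_le.1 h0) (Real.exp_pos (u - y))
      linarith
    have h3 : (h u + c) * Real.exp (u - y) ≤ (h u + c) * (1 + κ) := by gcongr
    by_contra h4
    push Not at h4
    nlinarith
end Laplace

open Filter

section WI
open MeasureTheory Set ArithmeticFunction.vonMangoldt

/-- Chebyshev psi function in the residue class `1` modulo `q`. -/
noncomputable def psiAP (q : ℕ) (x : ℝ) : ℝ :=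
  ∑ k ∈ Finset.Icc 1 ⌊x⌋₊, residueClass (1 : ZMod q) k

lemma psiAP_nonneg (q : ℕ) (x : ℝ) : 0 ≤ psiAP q x :=
  Finset.sum_nonneg fun _ _ => residueClass_nonneg _ _

lemma psiAP_mono (q : ℕ) : Monotone (psiAP q) := by
  intro x y hxy
  apply Finset.sum_le_sum_of_subset_of_nonneg
  · exact Finset.Icc_subset_Icc_right (Nat.floor_le_floor hxy)
  · intro _ _ _; exact residueClass_nonneg _ _

lemma psiAP_le (q : ℕ) {x : ℝ} (hx : 0 ≤ x) : psiAP q x ≤ (Real.log 4 + 4) * x := by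
  refine le_trans ?_ (Chebyshev.psi_le_const_mul_self hx)
  unfold psiAP Chebyshev.psi
  exact Finset.sum_le_sum fun _ _ => residueClass_le _ _

lemma psiAP_tendsto_exp (q : ℕ) [NeZero q] :
    Tendsto (fun u : ℝ => psiAP q (Real.exp u) * Real.exp (-u) - (q.totient : ℝ)⁻¹)
      atTop (nhds 0) := by
  set c : ℝ := (q.totient : ℝ)⁻¹ with hcdef
  have hc : 0 ≤ c := by positivity
  have hlog : 0 ≤ Real.log 4 := Real.log_nonneg (by norm_num)
  have hbm : Measurable (fun u : ℝ => psiAP q (Real.exp u) * Real.exp (-u)) := by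
    have := (psiAP_mono q).measurable
    fun_prop
  have hb0 : ∀ u, 0 ≤ psiAP q (Real.exp u) * Real.exp (-u) := fun u =>
    mul_nonneg (psiAP_nonneg _ _) (Real.exp_pos _).le
  have hb1 : ∀ u, psiAP q (Real.exp u) * Real.exp (-u) ≤ Real.log 4 + 4 := fun u => by
    have := psiAP_le q (Real.exp_pos u).le
    calc _ ≤ (Real.log 4 + 4) * Real.exp u * Real.exp (-u) := by gcongr
      _ = _ := by rw [mul_assoc, ← Real.exp_add]; simp
  have hone : IsUnit (1 : ZMod q) := isUnit_one
  have hlap : ∀ s : ℂ, 0 < s.re →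
      ∫ u in Ioi (0:ℝ), ((psiAP q (Real.exp u) * Real.exp (-u) : ℝ) : ℂ) * Complex.exp (-s * u)
        = LSeries (fun n => (residueClass (1 : ZMod q) n : ℂ)) (s + 1) / (s + 1) := by
    intro s hs
    have hne : s + 1 ≠ 0 := by
      intro h; have := congrArg Complex.re h; simp at this; linarith
    rw [LSeries_eq_mul_integral_of_nonneg (residueClass (1 : ZMod q)) (r := 1) zero_le_one
      (by simpa using hs) ?_ (residueClass_nonneg _), mul_div_cancel_left₀ _ hne]
    · have := integral_comp_exp_Ioi (fun t : ℝ => (∑ k ∈ Finset.Icc 1 ⌊t⌋₊,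
        (residueClass (1 : ZMod q) k : ℂ)) * (t : ℂ) ^ (-(s + 1 + 1))) 0
      rw [Real.exp_zero] at this
      rw [← this]
      refine setIntegral_congr_fun measurableSet_Ioi fun u _ => ?_
      simp only [psiAP]
      have e1 : ((Real.exp u : ℝ) : ℂ) ^ (-(s + 1 + 1)) = Complex.exp (-(s + 1 + 1) * u) := by
        rw [Complex.cpow_def_of_ne_zero (by exact_mod_cast (Real.exp_pos u).ne'),
          ← Complex.ofReal_log (Real.exp_pos u).le, Real.log_exp]
        ring_nf
      rw [e1, Complex.real_smul]
      push_cast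
      have e2 : Complex.exp u * Complex.exp (-(s + 1 + 1) * u) = Complex.exp (-u) *
          Complex.exp (-s * u) := by
        rw [← Complex.exp_add, ← Complex.exp_add]; congr 1; ring
      linear_combination (-∑ k ∈ Finset.Icc 1 ⌊Real.exp u⌋₊,
        (residueClass (1 : ZMod q) k : ℂ)) * e2
    · apply Asymptotics.isBigO_of_le' (c := Real.log 4 + 4)
      intro n
      have h1 := psiAP_le q (Nat.cast_nonneg (α := ℝ) n)
      have h2 := psiAP_nonneg q n
      simp only [psiAP, Nat.floor_natCast] at h1 h2
      rw [Real.norm_of_nonneg h2]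
      simpa using h1
  refine tauber (B := Real.log 4 + 4 + c) (c := c)
    (G := fun s => (LFunctionResidueClassAux (1 : ZMod q) (s + 1) - c) / (s + 1)) hc
    (hbm.sub_const c) ?_ ?_ ?_ ?_
  · intro u
    rw [abs_le]
    constructor <;> linarith [hb0 u, hb1 u]
  · apply ContinuousOn.div
    · apply ContinuousOn.sub _ continuousOn_const
      apply (continuousOn_LFunctionResidueClassAux (1 : ZMod q)).comp (by fun_prop)
      intro s hs
      simpa using hs
    · fun_prop
    · intro s hs h
      have := congrArg Complex.re h; simp at this hs; linarith
  · intro s hs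
    have hs0 : s ≠ 0 := by rintro rfl; simp at hs
    have hne : s + 1 ≠ 0 := by
      intro h; have := congrArg Complex.re h; simp at this; linarith
    have hi : IntegrableOn (fun u : ℝ => Complex.exp (-s * u)) (Ioi 0) :=
      integrableOn_exp_mul_complex_Ioi (by simpa using hs) 0
    have hi2 : IntegrableOn (fun u : ℝ => ((psiAP q (Real.exp u) * Real.exp (-u) : ℝ) : ℂ) *
        Complex.exp (-s * u)) (Ioi 0) := by
      refine hi.bdd_mul (c := Real.log 4 + 4) ?_ (ae_of_all _ fun u => ?_)
      · exact (Complex.measurable_ofReal.comp hbm).aestronglyMeasurable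
      · rw [Complex.norm_real, Real.norm_of_nonneg (hb0 u)]; exact hb1 u
    have haux := eqOn_LFunctionResidueClassAux hone (show 1 < (s + 1).re by simpa using hs)
    simp only at haux
    have hexp : ∫ u in Ioi (0:ℝ), Complex.exp (-s * u) = 1 / s := by
      rw [integral_exp_mul_complex_Ioi (by simpa using hs) 0]
      simp
    calc _ = ∫ u in Ioi (0:ℝ), (((psiAP q (Real.exp u) * Real.exp (-u) : ℝ) : ℂ) *
          Complex.exp (-s * u) - c * Complex.exp (-s * u)) := by
          congr 1; ext u; push_cast; ring
      _ = _ := by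
          rw [integral_sub hi2 (hi.const_mul _), hlap s hs, integral_const_mul, hexp, haux, hcdef]
          push_cast
          rw [add_sub_cancel_right]
          field_simp
          ring
  · intro u v _ huv
    have h1 := psiAP_mono q (Real.exp_le_exp.2 huv)
    have h2 : Real.exp (-v) * Real.exp (v - u) = Real.exp (-u) := by
      rw [← Real.exp_add]; congr 1; ring
    simp only [sub_add_cancel]
    rw [mul_assoc, h2]
    gcongr

theorem psiAP_tendsto (q : ℕ) [NeZero q] :
    Tendsto (fun x : ℝ => psiAP q x / x) atTop (nhds (q.totient : ℝ)⁻¹) := by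
  have h := ((psiAP_tendsto_exp q).comp Real.tendsto_log_atTop).add_const ((q.totient : ℝ)⁻¹)
  rw [zero_add] at h
  refine h.congr' ?_
  filter_upwards [eventually_gt_atTop 0] with x hx
  simp only [Function.comp_apply, sub_add_cancel]
  rw [Real.exp_neg, Real.exp_log hx, div_eq_mul_inv]

/-- Chebyshev theta function in the residue class `1` modulo `q`. -/
noncomputable def thetaAP (q : ℕ) (n : ℕ) : ℝ :=
  ∑ p ∈ (Finset.range (n + 1)).filter (fun p => p.Prime ∧ q ∣ p - 1), Real.log p

theorem thetaAP_tendsto (q : ℕ) [NeZero q] :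
    Tendsto (fun n : ℕ => thetaAP q n / n) atTop (nhds (q.totient : ℝ)⁻¹) := by
  have h1 := (psiAP_tendsto q).comp tendsto_natCast_atTop_atTop
  have hdiff : ∀ n : ℕ, 0 ≤ psiAP q n - thetaAP q n ∧
      psiAP q n - thetaAP q n ≤ Chebyshev.psi n - Chebyshev.theta n := by
    intro n
    have e1 : psiAP q n - thetaAP q n = ∑ k ∈ Finset.Icc 1 n,
        (residueClass (1 : ZMod q) k - if k.Prime ∧ q ∣ k - 1 then Real.log k else 0) := by
      rw [Finset.sum_sub_distrib, ← Finset.sum_filter, psiAP, thetaAP, Nat.floor_natCast]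
      congr 1
      apply Finset.sum_congr _ fun _ _ => rfl
      ext p
      simp only [Finset.mem_filter, Finset.mem_range, Finset.mem_Icc]
      constructor
      · rintro ⟨a, b, c⟩; exact ⟨⟨b.one_lt.le, by omega⟩, b, c⟩
      · rintro ⟨a, b, c⟩; exact ⟨by omega, b, c⟩
    have e2 : Chebyshev.psi n - Chebyshev.theta n = ∑ k ∈ Finset.Icc 1 n,
        (ArithmeticFunction.vonMangoldt k - if k.Prime then Real.log k else 0) := by
      rw [Finset.sum_sub_distrib, ← Finset.sum_filter, Chebyshev.psi, Chebyshev.theta,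
        Nat.floor_natCast]
      rfl
    have hpt : ∀ k ∈ Finset.Icc 1 n,
        0 ≤ (residueClass (1 : ZMod q) k - if k.Prime ∧ q ∣ k - 1 then Real.log k else 0) ∧
        (residueClass (1 : ZMod q) k - if k.Prime ∧ q ∣ k - 1 then Real.log k else 0) ≤
        (ArithmeticFunction.vonMangoldt k - if k.Prime then Real.log k else 0) := by
      intro k hk
      have hk1 := (Finset.mem_Icc.1 hk).1
      have hiff : ((k : ZMod q) = 1) ↔ q ∣ k - 1 := by
        rw [← Nat.cast_one, eq_comm, ZMod.natCast_eq_natCast_iff, Nat.modEq_iff_dvd' hk1]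
      have hres : residueClass (1 : ZMod q) k =
          if q ∣ k - 1 then ArithmeticFunction.vonMangoldt k else 0 := by
        simp only [residueClass, indicator, mem_ofPred_eq, hiff]
      rw [hres]
      have hv := ArithmeticFunction.vonMangoldt_nonneg (n := k)
      by_cases hp : k.Prime
      · rw [ArithmeticFunction.vonMangoldt_apply_prime hp]
        by_cases hq : q ∣ k - 1 <;> simp [hp, hq]
      · by_cases hq : q ∣ k - 1 <;> simp [hp, hq, hv]
    rw [e1, e2]
    exact ⟨Finset.sum_nonneg fun k hk => (hpt k hk).1, Finset.sum_le_sum fun k hk => (hpt k hk).2⟩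
  have h2 : Tendsto (fun n : ℕ => (psiAP q n - thetaAP q n) / n) atTop (nhds 0) := by
    obtain ⟨C, hC⟩ := Chebyshev.psi_sub_theta_le_mul_sqrt
    have h3 : Tendsto (fun n : ℕ => C * (Real.sqrt n)⁻¹) atTop (nhds 0) := by
      rw [← mul_zero C]
      exact ((tendsto_inv_atTop_zero.comp Real.tendsto_sqrt_atTop).comp
        tendsto_natCast_atTop_atTop).const_mul C
    refine squeeze_zero' (Eventually.of_forall fun n => div_nonneg (hdiff n).1 (Nat.cast_nonneg n))
      ?_ h3
    filter_upwards [eventually_gt_atTop 0] with n hn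
    have hn' : (0:ℝ) < n := by exact_mod_cast hn
    rw [div_le_iff₀ hn']
    refine ((hdiff n).2.trans (hC n)).trans (le_of_eq ?_)
    have := Real.sqrt_pos.2 hn'
    have h4 := Real.mul_self_sqrt hn'.le
    field_simp
    linear_combination C * h4
  have h3 := h1.sub h2
  rw [sub_zero] at h3
  refine h3.congr fun n => ?_
  simp only [Function.comp_apply]
  ring
end WI

open Filter

section ChebAP

lemma coprime_part_dvd (q M u : ℕ) (hu : u ∣ M.factorial) (hc : Nat.Coprime q u) :
    u ∣ ∏ i ∈ Finset.range M, (1 + q * (i + 1)) := by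
  rcases Nat.eq_zero_or_pos u with rfl | hu0
  · exact absurd (Nat.eq_zero_of_zero_dvd hu) (Nat.factorial_ne_zero M)
  obtain ⟨a, ha⟩ : ∃ a : ℕ, (q : ZMod u) * (a : ZMod u) = 1 := by
    haveI : NeZero u := ⟨hu0.ne'⟩
    refine ⟨((q : ZMod u)⁻¹).val, ?_⟩
    rw [ZMod.natCast_zmod_val]
    exact ZMod.coe_mul_inv_eq_one q hc
  have h1 : u ∣ ∏ i ∈ Finset.range M, (a + 1 + i) := by
    rw [← Nat.ascFactorial_eq_prod_range]
    exact hu.trans (Nat.factorial_dvd_ascFactorial _ _)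
  rw [← ZMod.natCast_eq_zero_iff] at h1 ⊢
  push_cast at h1 ⊢
  have h2 : ∏ i ∈ Finset.range M, (1 + (q : ZMod u) * (i + 1)) =
      ∏ i ∈ Finset.range M, ((q : ZMod u) * (a + 1 + i)) := by
    apply Finset.prod_congr rfl
    intro i _
    linear_combination -ha
  rw [h2, Finset.prod_mul_distrib, h1, mul_zero]

lemma thetaAP_large_le (q M : ℕ) (hq : q.Prime) :
    ∑ p ∈ (Finset.range (q * M + q + 1)).filter (fun p => (p.Prime ∧ q ∣ p - 1) ∧ M < p ∧ p ≤ q * M + 1),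
      Real.log p ≤ 3 * M * Real.log q := by
  set s := (Finset.range (q * M + q + 1)).filter
    (fun p => (p.Prime ∧ q ∣ p - 1) ∧ M < p ∧ p ≤ q * M + 1) with hs
  have hsp : ∀ p ∈ s, (p.Prime ∧ q ∣ p - 1) ∧ M < p ∧ p ≤ q * M + 1 := fun p hp =>
    (Finset.mem_filter.1 hp).2
  obtain ⟨e, u, hu, he⟩ := Nat.exists_eq_pow_mul_and_not_dvd (Nat.factorial_ne_zero M) q hq.ne_one
  have hcop : Nat.Coprime q u := (Nat.Prime.coprime_iff_not_dvd hq).2 hu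
  have hudvd : u ∣ M.factorial := Dvd.intro_left _ he.symm
  obtain ⟨Q, hQ⟩ := coprime_part_dvd q M u hudvd hcop
  set N := ∏ i ∈ Finset.range M, (1 + q * (i + 1)) with hN
  have hN0 : 0 < N := Finset.prod_pos fun i _ => by positivity
  have hu0 : 0 < u := Nat.pos_of_ne_zero (by rintro rfl; simp at hQ; omega)
  have hQ0 : 0 < Q := Nat.pos_of_ne_zero (by rintro rfl; simp at hQ; omega)
  have hq0 := hq.pos
  have heM : e ≤ M := by
    haveI := Fact.mk hq
    have h1 : e ≤ padicValNat q M.factorial :=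
      (padicValNat_dvd_iff_le (Nat.factorial_ne_zero M)).1 (Dvd.intro _ he.symm)
    have h2 := sub_one_mul_padicValNat_factorial (p := q) M
    have h3 : 1 * padicValNat q M.factorial ≤ (q - 1) * padicValNat q M.factorial :=
      Nat.mul_le_mul_right _ (by have := hq.two_le; omega)
    omega
  have hdvd : ∏ p ∈ s, p ∣ Q := by
    apply Finset.prod_primes_dvd
    · intro p hp; exact (hsp p hp).1.1.prime
    · intro p hp
      obtain ⟨⟨hp1, hp2⟩, hp3, hp4⟩ := hsp p hp
      have hpN : p ∣ N := by
        obtain ⟨m, hm⟩ := hp2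
        have hp5 := hp1.two_le
        have hm0 : m ≠ 0 := by rintro rfl; omega
        have hmM : m ≤ M := by
          by_contra hcon
          have : q * (M + 1) ≤ q * m := Nat.mul_le_mul_left _ (by omega)
          have : q * M < q * (M + 1) := Nat.mul_lt_mul_of_pos_left (by omega) hq0
          omega
        have : p = 1 + q * ((m - 1) + 1) := by
          rw [Nat.sub_add_cancel (by omega)]; omega
        rw [this]
        exact Finset.dvd_prod_of_mem (fun i => 1 + q * (i + 1)) (Finset.mem_range.2 (by omega))
      rw [hQ] at hpN
      rcases hp1.dvd_mul.1 hpN with h | h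
      · have := (Nat.Prime.dvd_factorial hp1).1 (h.trans hudvd)
        omega
      · exact h
  have hlogQ : ∑ p ∈ s, Real.log p ≤ Real.log Q := by
    rw [← Real.log_prod (fun p hp => by exact_mod_cast (hsp p hp).1.1.ne_zero)]
    apply Real.log_le_log
    · exact Finset.prod_pos fun p hp => by exact_mod_cast (hsp p hp).1.1.pos
    · have h5 : ((∏ p ∈ s, p : ℕ) : ℝ) ≤ Q := by
        exact_mod_cast Nat.le_of_dvd hQ0 hdvd
      rwa [Nat.cast_prod] at h5
  refine hlogQ.trans ?_
  have hbound : Q ≤ q ^ (3 * M) := by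
    have h1 : N ≤ ∏ i ∈ Finset.range M, (q ^ 2 * (i + 1)) := by
      apply Finset.prod_le_prod' 
      intro i _
      have h6 : 2 * (q * (i + 1)) ≤ q * (q * (i + 1)) := Nat.mul_le_mul_right _ hq.two_le
      have h7 : 1 ≤ q * (i + 1) := Nat.mul_pos hq0 (Nat.succ_pos i)
      have h8 : q ^ 2 * (i + 1) = q * (q * (i + 1)) := by ring
      change 1 + q * (i + 1) ≤ q ^ 2 * (i + 1)
      omega
    rw [Finset.prod_mul_distrib, Finset.prod_const, Finset.card_range,
      Finset.prod_range_add_one_eq_factorial, he] at h1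
    have h2 : u * Q ≤ u * ((q ^ 2) ^ M * q ^ e) := by
      rw [← hQ]; refine h1.trans (le_of_eq (by ring))
    have h3 := Nat.le_of_mul_le_mul_left h2 hu0
    refine h3.trans ?_
    rw [← pow_mul, ← pow_add]
    exact Nat.pow_le_pow_right hq0 (by omega)
  calc Real.log Q ≤ Real.log ((q : ℝ) ^ (3 * M)) := by
        apply Real.log_le_log (by exact_mod_cast hQ0)
        exact_mod_cast hbound
    _ = _ := by rw [Real.log_pow]; push_cast; ring

lemma thetaAP_le (q n : ℕ) (hq : q.Prime) : thetaAP q n ≤ 5 * n * (Real.log q / q) := by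
  set M := n / q with hM
  have hq0 := hq.pos
  have hn : n < q * M + q := by
    have := Nat.lt_mul_div_succ n hq0
    rw [Nat.mul_add, mul_one] at this
    exact this
  have hlq : Real.log 2 ≤ Real.log q := Real.log_le_log (by norm_num) (by exact_mod_cast hq.two_le)
  have hl2 := Real.log_nonneg (show (1:ℝ) ≤ 2 by norm_num)
  have hsplit : thetaAP q n ≤ Chebyshev.theta M +
      ∑ p ∈ (Finset.range (q * M + q + 1)).filter
        (fun p => (p.Prime ∧ q ∣ p - 1) ∧ M < p ∧ p ≤ q * M + 1), Real.log p := by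
    unfold thetaAP
    rw [← Finset.sum_filter_add_sum_filter_not _ (fun p => p ≤ M)]
    apply add_le_add
    · unfold Chebyshev.theta
      apply Finset.sum_le_sum_of_subset_of_nonneg
      · intro p hp
        simp only [Finset.mem_filter, Finset.mem_range, Finset.mem_Ioc, Nat.floor_natCast] at hp ⊢
        exact ⟨⟨hp.1.2.1.pos, hp.2⟩, hp.1.2.1⟩
      · intro p _ _; exact Real.log_natCast_nonneg p
    · apply Finset.sum_le_sum_of_subset_of_nonneg
      · intro p hp
        simp only [Finset.mem_filter, Finset.mem_range, not_le] at hp ⊢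
        obtain ⟨⟨h1, h2, h3⟩, h4⟩ := hp
        refine ⟨by omega, ⟨h2, h3⟩, h4, ?_⟩
        obtain ⟨m, hm⟩ := h3
        have hmM : m ≤ M := by
          rw [hM, Nat.le_div_iff_mul_le hq0, mul_comm]; omega
        have := Nat.mul_le_mul_left q hmM
        omega
      · intro p _ _; exact Real.log_natCast_nonneg p
  have h1 := thetaAP_large_le q M hq
  have h2 := Chebyshev.theta_le_log4_mul_x (Nat.cast_nonneg (α := ℝ) M)
  have h4 : Real.log 4 = 2 * Real.log 2 := by
    rw [show (4:ℝ) = 2 ^ 2 by norm_num, Real.log_pow]; norm_num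
  have hMn : (M : ℝ) ≤ n / q := by rw [hM]; exact Nat.cast_div_le
  have hM0 : (0:ℝ) ≤ M := Nat.cast_nonneg M
  calc thetaAP q n ≤ 2 * Real.log 2 * M + 3 * M * Real.log q := by rw [← h4]; linarith
    _ ≤ 5 * M * Real.log q := by nlinarith
    _ ≤ 5 * (n / q) * Real.log q := by gcongr
    _ = _ := by ring

end ChebAP

open Filter

section MeanValue

noncomputable def fz (z n : ℕ) : ℝ :=
  ∏ l ∈ (Finset.range z).filter Nat.Prime, (1 + -(if l ∣ n then (1 : ℝ) / l else 0))

lemma prod_ind (t : Finset ℕ) (ht : ∀ l ∈ t, l.Prime) (n : ℕ) :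
    ∏ l ∈ t, -(if l ∣ n then (1 : ℝ) / l else 0) =
      (∏ l ∈ t, -((1 : ℝ) / l)) * (if (∏ l ∈ t, l) ∣ n then 1 else 0) := by
  by_cases h : ∀ l ∈ t, l ∣ n
  · rw [if_pos (Finset.prod_primes_dvd n (fun l hl => (ht l hl).prime) h), mul_one]
    exact Finset.prod_congr rfl fun l hl => by rw [if_pos (h l hl)]
  · push Not at h
    obtain ⟨l, hl, hln⟩ := h
    rw [if_neg (fun hd => hln ((Finset.dvd_prod_of_mem (fun l => l) hl).trans hd)), mul_zero]
    exact Finset.prod_eq_zero hl (by rw [if_neg hln, neg_zero])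

lemma fz_expand (z n : ℕ) : fz z n = ∑ t ∈ ((Finset.range z).filter Nat.Prime).powerset,
    (∏ l ∈ t, -((1 : ℝ) / l)) * (if (∏ l ∈ t, l) ∣ n then 1 else 0) := by
  unfold fz
  rw [Finset.prod_one_add]
  apply Finset.sum_congr rfl
  intro t ht
  exact prod_ind t (fun l hl => (Finset.mem_filter.1 (Finset.mem_powerset.1 ht hl)).2) n

lemma sum_fz (z N : ℕ) :
    ∑ p ∈ (Finset.range (N + 1)).filter Nat.Prime, Real.log p * fz z (p - 1) =
      ∑ t ∈ ((Finset.range z).filter Nat.Prime).powerset,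
        (∏ l ∈ t, -((1 : ℝ) / l)) * thetaAP (∏ l ∈ t, l) N := by
  simp_rw [fz_expand, Finset.mul_sum]
  rw [Finset.sum_comm]
  apply Finset.sum_congr rfl
  intro t _
  unfold thetaAP
  rw [← Finset.filter_filter, Finset.sum_filter (fun p => (∏ l ∈ t, l) ∣ p - 1), Finset.mul_sum]
  apply Finset.sum_congr rfl
  intro p _
  split_ifs <;> ring

lemma totient_prod (t : Finset ℕ) (ht : ∀ l ∈ t, l.Prime) :
    (∏ l ∈ t, l).totient = ∏ l ∈ t, (l - 1) := by
  classical
  induction t using Finset.induction_on with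
  | empty => simp
  | insert a s ha ih =>
    rw [Finset.prod_insert ha, Finset.prod_insert ha, Nat.totient_mul, ih, Nat.totient_prime]
    · exact ht a (Finset.mem_insert_self a s)
    · exact fun l hl => ht l (Finset.mem_insert_of_mem hl)
    · apply Nat.Coprime.prod_right
      intro l hl
      exact (Nat.coprime_primes (ht a (Finset.mem_insert_self a s))
        (ht l (Finset.mem_insert_of_mem hl))).2 (fun h => ha (h ▸ hl))

noncomputable def artP (z : ℕ) : ℝ :=
  ∏ l ∈ (Finset.range z).filter Nat.Prime, (1 + -((1 : ℝ) / (l * (l - 1))))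

lemma artP_eq (z : ℕ) : artP z = ∑ t ∈ ((Finset.range z).filter Nat.Prime).powerset,
    (∏ l ∈ t, -((1 : ℝ) / l)) * ((∏ l ∈ t, l).totient : ℝ)⁻¹ := by
  unfold artP
  rw [Finset.prod_one_add]
  apply Finset.sum_congr rfl
  intro t ht
  have htp : ∀ l ∈ t, l.Prime := fun l hl => (Finset.mem_filter.1 (Finset.mem_powerset.1 ht hl)).2
  rw [totient_prod t htp, Nat.cast_prod, ← Finset.prod_inv_distrib, ← Finset.prod_mul_distrib]
  apply Finset.prod_congr rfl
  intro l hl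
  rw [Nat.cast_sub (htp l hl).one_le, Nat.cast_one, one_div, mul_inv, one_div]
  ring

lemma fz_mean (z : ℕ) :
    Tendsto (fun N : ℕ =>
      (∑ p ∈ (Finset.range (N + 1)).filter Nat.Prime, Real.log p * fz z (p - 1)) / N)
      atTop (nhds (artP z)) := by
  simp_rw [sum_fz, Finset.sum_div, mul_div_assoc]
  rw [artP_eq]
  apply tendsto_finsetSum
  intro t ht
  have : NeZero (∏ l ∈ t, l) := ⟨Finset.prod_ne_zero_iff.2 fun l hl =>
    (Finset.mem_filter.1 (Finset.mem_powerset.1 ht hl)).2.ne_zero⟩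
  exact (thetaAP_tendsto _).const_mul _

lemma prod_one_sub_bounds (s : Finset ℕ) (f : ℕ → ℝ) (h0 : ∀ i ∈ s, 0 ≤ f i)
    (h1 : ∀ i ∈ s, f i ≤ 1) :
    0 ≤ ∏ i ∈ s, (1 - f i) ∧ ∏ i ∈ s, (1 - f i) ≤ 1 ∧ 1 - ∑ i ∈ s, f i ≤ ∏ i ∈ s, (1 - f i) := by
  classical
  induction s using Finset.induction_on with
  | empty => simp
  | insert a s ha ih =>
    obtain ⟨a1, a2, a3⟩ := ih (fun i hi => h0 i (Finset.mem_insert_of_mem hi))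
      (fun i hi => h1 i (Finset.mem_insert_of_mem hi))
    have b0 := h0 a (Finset.mem_insert_self a s)
    have b1 := h1 a (Finset.mem_insert_self a s)
    rw [Finset.prod_insert ha, Finset.sum_insert ha]
    refine ⟨by apply mul_nonneg <;> linarith, by nlinarith, by nlinarith⟩

lemma totient_div (n : ℕ) (hn : n ≠ 0) :
    (n.totient : ℝ) / n = ∏ l ∈ n.primeFactors, (1 - 1 / (l : ℝ)) := by
  have h := Nat.totient_eq_mul_prod_factors n
  have h2 : (n.totient : ℝ) = n * ∏ p ∈ n.primeFactors, (1 - (p : ℝ)⁻¹) := by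
    have h3 := congrArg (fun x : ℚ => (x : ℝ)) h
    push_cast at h3
    exact h3
  have : (n : ℝ) ≠ 0 := by exact_mod_cast hn
  rw [h2, mul_div_cancel_left₀ _ this]
  simp_rw [one_div]

lemma fz_approx (z N n : ℕ) (hn : n ≠ 0) (hnN : n ≤ N) :
    |(n.totient : ℝ) / n - fz z n| ≤
      ∑ l ∈ (Finset.Ico z (N + 1)).filter Nat.Prime, (if l ∣ n then (1 : ℝ) / l else 0) := by
  have h1 : (n.totient : ℝ) / n = ∏ l ∈ (Finset.range (N + 1)).filter Nat.Prime,
      (1 - (if l ∣ n then (1 : ℝ) / l else 0)) := by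
    rw [totient_div n hn]
    have : n.primeFactors = ((Finset.range (N + 1)).filter Nat.Prime).filter (fun l => l ∣ n) := by
      ext l
      simp only [Nat.mem_primeFactors, Finset.mem_filter, Finset.mem_range]
      constructor
      · rintro ⟨a, b, c⟩
        exact ⟨⟨Nat.lt_succ_of_le ((Nat.le_of_dvd (Nat.pos_of_ne_zero hn) b).trans hnN), a⟩, b⟩
      · rintro ⟨⟨a, b⟩, c⟩
        exact ⟨b, c, hn⟩
    rw [this, Finset.prod_filter (fun l => l ∣ n)]
    apply Finset.prod_congr rfl
    intro l _
    split_ifs <;> simp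
  have h2 : fz z n = ∏ l ∈ (Finset.range z).filter Nat.Prime,
      (1 - (if l ∣ n then (1 : ℝ) / l else 0)) := by
    unfold fz; simp_rw [sub_eq_add_neg]
  have hb0 : ∀ l : ℕ, (0:ℝ) ≤ (if l ∣ n then (1 : ℝ) / l else 0) := by
    intro l; split_ifs <;> positivity
  have hb1 : ∀ l : ℕ, (if l ∣ n then (1 : ℝ) / l else 0) ≤ 1 := by
    intro l; split_ifs
    · rcases Nat.eq_zero_or_pos l with rfl | hl
      · simp
      · rw [div_le_one (by exact_mod_cast hl)]; exact_mod_cast hl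
    · norm_num
  rcases le_total z (N + 1) with hz | hz
  · have h3 : ∏ l ∈ (Finset.range (N + 1)).filter Nat.Prime,
        (1 - (if l ∣ n then (1 : ℝ) / l else 0)) = fz z n *
        ∏ l ∈ (Finset.Ico z (N + 1)).filter Nat.Prime,
        (1 - (if l ∣ n then (1 : ℝ) / l else 0)) := by
      rw [h2, Finset.prod_filter, Finset.prod_filter, Finset.prod_filter,
        Finset.prod_range_mul_prod_Ico _ hz]
    obtain ⟨a1, a2, a3⟩ := prod_one_sub_bounds ((Finset.range z).filter Nat.Prime)
      (fun l => if l ∣ n then (1 : ℝ) / l else 0) (fun l _ => hb0 l) (fun l _ => hb1 l)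
    obtain ⟨b1, b2, b3⟩ := prod_one_sub_bounds ((Finset.Ico z (N + 1)).filter Nat.Prime)
      (fun l => if l ∣ n then (1 : ℝ) / l else 0) (fun l _ => hb0 l) (fun l _ => hb1 l)
    rw [← h2] at a1 a2
    rw [h1, h3, abs_le]
    constructor <;> nlinarith
  · have h3 : fz z n = (n.totient : ℝ) / n := by
      rw [h1, h2]
      symm
      apply Finset.prod_subset
      · exact Finset.filter_subset_filter _ (Finset.range_mono hz)
      · intro l hl hl2
        simp only [Finset.mem_filter, Finset.mem_range, not_and] at hl hl2
        have : N + 1 ≤ l := by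
          by_contra hc
          exact hl2 (by omega) hl.2
        rw [if_neg, sub_zero]
        intro hd
        have := Nat.le_of_dvd (Nat.pos_of_ne_zero hn) hd
        omega
    rw [h3, sub_self, abs_zero]
    exact Finset.sum_nonneg fun l _ => hb0 l

noncomputable def LL (l : ℕ) : ℝ := Real.log l / (l : ℝ) ^ 2

lemma LL_nonneg (l : ℕ) : 0 ≤ LL l := div_nonneg (Real.log_natCast_nonneg l) (by positivity)

lemma LL_summable : Summable LL := by
  have h : Summable fun n : ℕ => 2 * (1 / (n : ℝ) ^ (3 / 2 : ℝ)) :=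
    (Real.summable_one_div_nat_rpow.2 (by norm_num)).mul_left 2
  refine Summable.of_nonneg_of_le LL_nonneg (fun n => ?_) h
  rcases Nat.eq_zero_or_pos n with rfl | hn
  · simp [LL]
  have hn' : (0:ℝ) < n := by exact_mod_cast hn
  have h1 := Real.log_le_rpow_div hn'.le (show (0:ℝ) < 1 / 2 by norm_num)
  unfold LL
  have h2 : (n : ℝ) ^ 2 = (n : ℝ) ^ (1 / 2 : ℝ) * (n : ℝ) ^ (3 / 2 : ℝ) := by
    rw [← Real.rpow_add hn', ← Real.rpow_natCast]; norm_num
  have h3 : 0 < (n : ℝ) ^ (1 / 2 : ℝ) := Real.rpow_pos_of_pos hn' _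
  have h4 : 0 < (n : ℝ) ^ (3 / 2 : ℝ) := Real.rpow_pos_of_pos hn' _
  rw [h2, div_le_iff₀ (by positivity)]
  calc Real.log n ≤ _ := h1
    _ = _ := by field_simp

noncomputable def logMean (N : ℕ) : ℝ :=
  ∑ p ∈ (Finset.range (N + 1)).filter Nat.Prime,
    Real.log p * (((p - 1).totient : ℝ) / ((p - 1 : ℕ) : ℝ))

lemma logMean_approx (z N : ℕ) :
    |logMean N - ∑ p ∈ (Finset.range (N + 1)).filter Nat.Prime, Real.log p * fz z (p - 1)| ≤
      5 * N * ∑' i, LL (i + z) := by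
  unfold logMean
  rw [← Finset.sum_sub_distrib]
  refine (Finset.abs_sum_le_sum_abs _ _).trans ?_
  have h1 : ∀ p ∈ (Finset.range (N + 1)).filter Nat.Prime,
      |Real.log p * (((p - 1).totient : ℝ) / ((p - 1 : ℕ) : ℝ)) - Real.log p * fz z (p - 1)| ≤
      ∑ l ∈ (Finset.Ico z (N + 1)).filter Nat.Prime,
        Real.log p * (if l ∣ p - 1 then (1 : ℝ) / l else 0) := by
    intro p hp
    rw [← mul_sub, abs_mul, abs_of_nonneg (Real.log_natCast_nonneg p), ← Finset.mul_sum]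
    have hp' := Finset.mem_filter.1 hp
    have := Finset.mem_range.1 hp'.1
    have := hp'.2.two_le
    exact mul_le_mul_of_nonneg_left (fz_approx z N (p - 1) (by omega) (by omega))
      (Real.log_natCast_nonneg p)
  refine (Finset.sum_le_sum h1).trans ?_
  rw [Finset.sum_comm]
  have h2 : ∀ l ∈ (Finset.Ico z (N + 1)).filter Nat.Prime,
      ∑ p ∈ (Finset.range (N + 1)).filter Nat.Prime,
        Real.log p * (if l ∣ p - 1 then (1 : ℝ) / l else 0) ≤ 5 * N * LL l := by
    intro l hl
    have hlp := (Finset.mem_filter.1 hl).2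
    have h3 : ∑ p ∈ (Finset.range (N + 1)).filter Nat.Prime,
        Real.log p * (if l ∣ p - 1 then (1 : ℝ) / l else 0) = (1 / l) * thetaAP l N := by
      unfold thetaAP
      rw [← Finset.filter_filter, Finset.sum_filter (fun p => l ∣ p - 1), Finset.mul_sum]
      apply Finset.sum_congr rfl
      intro p _
      split_ifs <;> ring
    rw [h3]
    calc (1 / (l:ℝ)) * thetaAP l N ≤ (1 / l) * (5 * N * (Real.log l / l)) := by
          gcongr; exact thetaAP_le l N hlp
      _ = _ := by unfold LL; rw [pow_two, ← div_div]; ring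
  refine (Finset.sum_le_sum h2).trans ?_
  rw [← Finset.mul_sum]
  apply mul_le_mul_of_nonneg_left _ (by positivity)
  calc ∑ l ∈ (Finset.Ico z (N + 1)).filter Nat.Prime, LL l ≤ ∑ l ∈ Finset.Ico z (N + 1), LL l :=
        Finset.sum_le_sum_of_subset_of_nonneg (Finset.filter_subset _ _) fun l _ _ => LL_nonneg l
    _ = ∑ i ∈ Finset.range (N + 1 - z), LL (i + z) := by
        rw [Finset.sum_Ico_eq_sum_range]; simp_rw [add_comm]
    _ ≤ _ := ((summable_nat_add_iff z).2 LL_summable).sum_le_tsum _ fun i _ => LL_nonneg _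

lemma artP_tendsto : Tendsto artP atTop (nhds artinConstant) := by
  set F : ℕ → ℝ := fun l => -((1 : ℝ) / (l * (l - 1))) with hF
  have hs : Summable (fun l : ℕ => ‖Set.indicator {p : ℕ | p.Prime} F l‖) := by
    have h : Summable fun n : ℕ => 2 * (1 / (n : ℝ) ^ 2) :=
      (Real.summable_one_div_nat_pow.2 (by norm_num)).mul_left 2
    refine Summable.of_nonneg_of_le (fun _ => norm_nonneg _) (fun n => ?_) h
    by_cases hn : n.Prime
    · rw [Set.indicator_of_mem (show n ∈ {p : ℕ | p.Prime} from hn), hF]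
      have h2 : (2:ℝ) ≤ n := by exact_mod_cast hn.two_le
      have h3 : (0:ℝ) < n * (n - 1) := by nlinarith
      rw [norm_neg, Real.norm_of_nonneg (by positivity), ← div_eq_mul_one_div,
        div_le_div_iff₀ h3 (by positivity)]
      nlinarith
    · rw [Set.indicator_of_notMem (show n ∉ {p : ℕ | p.Prime} from hn), norm_zero]
      positivity
  have hm := (multipliable_one_add_of_summable hs).hasProd.tendsto_prod_nat
  have e1 : ∏' l : ℕ, (1 + Set.indicator {p : ℕ | p.Prime} F l) = artinConstant := by
    have : (fun l : ℕ => 1 + Set.indicator {p : ℕ | p.Prime} F l) =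
        Set.mulIndicator {p : ℕ | p.Prime} (fun l => 1 + F l) := by
      ext l
      by_cases hl : l ∈ {p : ℕ | p.Prime}
      · rw [Set.indicator_of_mem hl, Set.mulIndicator_of_mem hl]
      · rw [Set.indicator_of_notMem hl, Set.mulIndicator_of_notMem hl, add_zero]
    rw [this, ← tprod_subtype]
    rfl
  rw [e1] at hm
  refine hm.congr fun n => ?_
  unfold artP
  rw [Finset.prod_filter]
  apply Finset.prod_congr rfl
  intro l _
  split_ifs with h
  · rw [Set.indicator_of_mem (show l ∈ {p : ℕ | p.Prime} from h)]
  · rw [Set.indicator_of_notMem (show l ∉ {p : ℕ | p.Prime} from h), add_zero]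

theorem logMean_tendsto : Tendsto (fun N : ℕ => logMean N / N) atTop (nhds artinConstant) := by
  rw [Metric.tendsto_atTop]
  intro ε hε
  have ht : Tendsto (fun z => ∑' i, LL (i + z)) atTop (nhds 0) := tendsto_sum_nat_add LL
  have e1 := (Metric.tendsto_nhds.1 ht) (ε / 20) (by positivity)
  have e2 := (Metric.tendsto_nhds.1 artP_tendsto) (ε / 4) (by positivity)
  obtain ⟨z, hz1, hz2⟩ := (e1.and e2).exists
  have e3 := (Metric.tendsto_nhds.1 (fz_mean z)) (ε / 4) (by positivity)
  obtain ⟨N0, hN0⟩ := eventually_atTop.1 (e3.and (eventually_gt_atTop 0))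
  refine ⟨N0, fun N hN => ?_⟩
  obtain ⟨h3, hNpos⟩ := hN0 N hN
  have hNp : (0:ℝ) < N := by exact_mod_cast hNpos
  have h4 := logMean_approx z N
  rw [Real.dist_eq] at *
  rw [sub_zero] at hz1
  set X := ∑ p ∈ (Finset.range (N + 1)).filter Nat.Prime, Real.log p * fz z (p - 1) with hX
  have h5 : |logMean N / N - X / N| ≤ ε / 4 := by
    rw [← sub_div, abs_div, abs_of_pos hNp, div_le_iff₀ hNp]
    refine h4.trans ?_
    have := le_abs_self (∑' i, LL (i + z))
    nlinarith
  rw [abs_le] at h5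
  rw [abs_lt] at *
  constructor <;> linarith [h5.1, h5.2, h3.1, h3.2, hz2.1, hz2.2]

end MeanValue

open Filter

section Final

noncomputable def aw (p : ℕ) : ℝ :=
  if p.Prime then Real.log p * (((p - 1).totient : ℝ) / ((p - 1 : ℕ) : ℝ) - artinConstant) else 0

noncomputable def ww (k n : ℕ) : ℝ := (n : ℝ) ^ k * ((n : ℝ) - 1) / Real.log n

noncomputable def Sw (n : ℕ) : ℝ := ∑ i ∈ Finset.range (n + 1), aw i

lemma Sw_eq (n : ℕ) : Sw n = logMean n - artinConstant * thetaAP 1 n := by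
  unfold Sw logMean thetaAP aw
  simp only [one_dvd, and_true]
  rw [← Finset.sum_filter, Finset.mul_sum, ← Finset.sum_sub_distrib]
  exact Finset.sum_congr rfl fun p _ => by ring

lemma theta_one_tendsto : Tendsto (fun n : ℕ => thetaAP 1 n / n) atTop (nhds 1) := by
  simpa using thetaAP_tendsto 1

lemma Sw_bound (ε : ℝ) (hε : 0 < ε) : ∃ C : ℝ, 0 ≤ C ∧ ∀ n : ℕ, |Sw n| ≤ ε * n + C := by
  have h : Tendsto (fun n : ℕ => Sw n / n) atTop (nhds 0) := by
    have := logMean_tendsto.sub (theta_one_tendsto.const_mul artinConstant)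
    rw [mul_one, sub_self] at this
    refine this.congr fun n => ?_
    rw [Sw_eq]; ring
  obtain ⟨N, hN⟩ := eventually_atTop.1
    (((Metric.tendsto_nhds.1 h) ε hε).and (eventually_gt_atTop 0))
  refine ⟨∑ i ∈ Finset.range N, |Sw i|, Finset.sum_nonneg fun _ _ => abs_nonneg _, fun n => ?_⟩
  rcases lt_or_ge n N with h1 | h1
  · have := Finset.single_le_sum (f := fun i => |Sw i|) (fun i _ => abs_nonneg _)
      (Finset.mem_range.2 h1)
    have h2 : 0 ≤ ε * n := by positivity
    linarith
  · obtain ⟨h2, h3⟩ := hN n h1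
    have h4 : (0:ℝ) < n := by exact_mod_cast h3
    rw [Real.dist_eq, sub_zero, abs_div, abs_of_pos h4, div_lt_iff₀ h4] at h2
    have : 0 ≤ ∑ i ∈ Finset.range N, |Sw i| := Finset.sum_nonneg fun _ _ => abs_nonneg _
    linarith

lemma ww_nonneg (k n : ℕ) : 0 ≤ ww k n := by
  rcases Nat.eq_zero_or_pos n with rfl | hn
  · simp [ww]
  · have : (1:ℝ) ≤ n := by exact_mod_cast hn
    exact div_nonneg (mul_nonneg (by positivity) (by linarith)) (Real.log_natCast_nonneg n)

lemma ww_mono_succ (k n : ℕ) : ww k n ≤ ww k (n + 1) := by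
  rcases lt_or_ge n 2 with hn | hn
  · have : ww k n = 0 := by interval_cases n <;> simp [ww]
    rw [this]; exact ww_nonneg _ _
  have hn2 : (2:ℝ) ≤ n := by exact_mod_cast hn
  have hl : 0 < Real.log n := Real.log_pos (by linarith)
  have hl2 : 0 < Real.log ((n + 1 : ℕ) : ℝ) := Real.log_pos (by push_cast; linarith)
  have key : ((n:ℝ) - 1) / Real.log n ≤ (n : ℝ) / Real.log ((n + 1 : ℕ) : ℝ) := by
    rw [div_le_div_iff₀ hl hl2]
    have e1 : Real.log ((n + 1 : ℕ) : ℝ) ≤ Real.log n + (n : ℝ)⁻¹ := by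
      have : ((n + 1 : ℕ) : ℝ) = n * (1 + (n:ℝ)⁻¹) := by push_cast; field_simp
      rw [this, Real.log_mul (by positivity) (by positivity)]
      have := Real.log_le_sub_one_of_pos (show 0 < 1 + (n:ℝ)⁻¹ by positivity)
      linarith
    have e2 := Real.one_sub_inv_le_log_of_pos (show (0:ℝ) < n by linarith)
    have e3 : (n:ℝ) * (n:ℝ)⁻¹ = 1 := mul_inv_cancel₀ (by linarith)
    nlinarith
  unfold ww
  rw [mul_div_assoc, mul_div_assoc]
  have : ((n + 1 : ℕ) : ℝ) - 1 = n := by push_cast; ring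
  rw [this]
  apply mul_le_mul _ key (div_nonneg (by linarith) hl.le) (by positivity)
  gcongr
  omega

lemma abel_id (w a : ℕ → ℝ) (n : ℕ) :
    ∑ i ∈ Finset.range (n + 1), w i * a i = w n * ∑ i ∈ Finset.range (n + 1), a i -
      ∑ i ∈ Finset.range n, (w (i + 1) - w i) * ∑ j ∈ Finset.range (i + 1), a j := by
  induction n with
  | zero => simp
  | succ n ih =>
    rw [Finset.sum_range_succ, ih,
      Finset.sum_range_succ (fun i => (w (i + 1) - w i) * ∑ j ∈ Finset.range (i + 1), a j) n,
      Finset.sum_range_succ (fun i => a i) (n + 1)]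
    ring

lemma abel_bound (k n : ℕ) (ε C : ℝ) (hε : 0 ≤ ε) (h : ∀ n : ℕ, |Sw n| ≤ ε * n + C) :
    |∑ i ∈ Finset.range (n + 1), ww k i * aw i| ≤ 2 * ww k n * (ε * n + C) := by
  rw [abel_id]
  have h1 : |ww k n * Sw n| ≤ ww k n * (ε * n + C) := by
    rw [abs_mul, abs_of_nonneg (ww_nonneg k n)]
    exact mul_le_mul_of_nonneg_left (h n) (ww_nonneg k n)
  have h2 : |∑ i ∈ Finset.range n, (ww k (i + 1) - ww k i) * Sw i| ≤ ww k n * (ε * n + C) := by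
    calc |∑ i ∈ Finset.range n, (ww k (i + 1) - ww k i) * Sw i|
        ≤ ∑ i ∈ Finset.range n, |(ww k (i + 1) - ww k i) * Sw i| :=
          Finset.abs_sum_le_sum_abs _ _
      _ ≤ ∑ i ∈ Finset.range n, (ww k (i + 1) - ww k i) * (ε * n + C) := by
          apply Finset.sum_le_sum
          intro i hi
          have h3 := sub_nonneg.2 (ww_mono_succ k i)
          rw [abs_mul, abs_of_nonneg h3]
          apply mul_le_mul_of_nonneg_left _ h3
          refine (h i).trans ?_
          have : (i:ℝ) ≤ n := by exact_mod_cast (Finset.mem_range.1 hi).le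
          nlinarith
      _ = (ww k n - ww k 0) * (ε * n + C) := by
          rw [← Finset.sum_mul, Finset.sum_range_sub]
      _ = _ := by simp [ww]
  have h3 := abs_sub (ww k n * Sw n) (∑ i ∈ Finset.range n, (ww k (i + 1) - ww k i) * Sw i)
  unfold Sw at h1 h2 h3
  linarith

noncomputable def numP (k n : ℕ) : ℝ :=
  ∑ p ∈ (Finset.range (n + 1)).filter Nat.Prime, (p : ℝ) ^ k * ((p - 1).totient : ℝ)

noncomputable def denP (k n : ℕ) : ℝ :=
  ∑ p ∈ (Finset.range (n + 1)).filter Nat.Prime, (p : ℝ) ^ k * ((p : ℝ) - 1)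

lemma num_sub (k n : ℕ) :
    ∑ i ∈ Finset.range (n + 1), ww k i * aw i = numP k n - artinConstant * denP k n := by
  unfold numP denP
  rw [Finset.mul_sum, ← Finset.sum_sub_distrib, Finset.sum_filter]
  apply Finset.sum_congr rfl
  intro p _
  unfold aw ww
  split_ifs with hp
  · have h2 : (2:ℝ) ≤ p := by exact_mod_cast hp.two_le
    have hl : Real.log p ≠ 0 := (Real.log_pos (by linarith)).ne'
    rw [Nat.cast_sub hp.one_le, Nat.cast_one]
    have h3 : (p:ℝ) - 1 ≠ 0 := by linarith
    field_simp
  · rw [mul_zero]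

lemma den_lower (k : ℕ) : ∃ c : ℝ, 0 < c ∧ ∀ᶠ n : ℕ in atTop, c * n * ww k n ≤ denP k n := by
  refine ⟨(1 / 8) ^ (k + 1) * (1 / 10), by positivity, ?_⟩
  have t1 := (Metric.tendsto_nhds.1 theta_one_tendsto) (1 / 2) (by norm_num)
  have t2 := (Metric.tendsto_nhds.1 theta_one_tendsto) (1 / 4) (by norm_num)
  have hdiv : Tendsto (fun n : ℕ => n / 4) atTop atTop :=
    Nat.tendsto_div_const_atTop (by norm_num)
  filter_upwards [t1, hdiv.eventually t2, eventually_ge_atTop 8] with n h1 h2 hn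
  have hn8 : (8:ℝ) ≤ n := by exact_mod_cast hn
  have hm : (0:ℝ) < ((n / 4 : ℕ) : ℝ) := by exact_mod_cast (show 0 < n / 4 by omega)
  rw [Real.dist_eq, abs_lt] at h1 h2
  have h1' : (1 / 2 : ℝ) * n ≤ thetaAP 1 n := by
    have : (1 / 2 : ℝ) ≤ thetaAP 1 n / n := by linarith [h1.1]
    rwa [le_div_iff₀ (by linarith)] at this
  have h2' : thetaAP 1 (n / 4) ≤ (5 / 4 : ℝ) * ((n / 4 : ℕ) : ℝ) := by
    have : thetaAP 1 (n / 4) / ((n / 4 : ℕ) : ℝ) ≤ 5 / 4 := by linarith [h2.2]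
    rwa [div_le_iff₀ hm] at this
  have hm4 : ((n / 4 : ℕ) : ℝ) ≤ n / 4 := by exact_mod_cast (Nat.cast_div_le (α := ℝ) (m := n) (n := 4))
  have hlogn : 0 < Real.log n := Real.log_pos (by linarith)
  have hsplit : thetaAP 1 n - thetaAP 1 (n / 4) =
      ∑ p ∈ (Finset.Ico (n / 4 + 1) (n + 1)).filter Nat.Prime, Real.log p := by
    unfold thetaAP
    simp only [one_dvd, and_true]
    rw [Finset.sum_filter, Finset.sum_filter, Finset.sum_filter, sub_eq_iff_eq_add',
      Finset.sum_range_add_sum_Ico _ (by omega)]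
  have hterm : ∀ p ∈ (Finset.Ico (n / 4 + 1) (n + 1)).filter Nat.Prime,
      (1 / 8 : ℝ) ^ (k + 1) * ww k n * Real.log p ≤ (p : ℝ) ^ k * ((p : ℝ) - 1) := by
    intro p hp
    obtain ⟨hp1, hp2⟩ := Finset.mem_filter.1 hp
    obtain ⟨hp3, hp4⟩ := Finset.mem_Ico.1 hp1
    have e1 : (n : ℝ) / 8 ≤ (p : ℝ) - 1 := by
      have : (n : ℝ) + 8 ≤ 8 * p := by exact_mod_cast (show n + 8 ≤ 8 * p by omega)
      linarith
    have e2 : (n : ℝ) / 8 ≤ p := by linarith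
    have hp0 : (0:ℝ) < p := by exact_mod_cast hp2.pos
    have e3 : Real.log p ≤ Real.log n :=
      Real.log_le_log hp0 (by exact_mod_cast (show p ≤ n by omega))
    have e4 : ww k n * Real.log p ≤ (n : ℝ) ^ k * n := by
      unfold ww
      rw [div_mul_eq_mul_div, div_le_iff₀ hlogn]
      have : 0 ≤ Real.log p := Real.log_natCast_nonneg p
      have : (0:ℝ) ≤ n - 1 := by linarith
      apply mul_le_mul _ e3 (by positivity) (by positivity)
      gcongr
      linarith
    calc (1 / 8 : ℝ) ^ (k + 1) * ww k n * Real.log p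
        = (1 / 8 : ℝ) ^ (k + 1) * (ww k n * Real.log p) := by ring
      _ ≤ (1 / 8 : ℝ) ^ (k + 1) * ((n : ℝ) ^ k * n) := by gcongr
      _ = ((n : ℝ) / 8) ^ k * (n / 8) := by
          rw [div_pow, div_pow, pow_succ (8:ℝ)]; field_simp; norm_num
      _ ≤ _ := by gcongr
  have hsub : ∑ p ∈ (Finset.Ico (n / 4 + 1) (n + 1)).filter Nat.Prime,
      (p : ℝ) ^ k * ((p : ℝ) - 1) ≤ denP k n := by
    unfold denP
    apply Finset.sum_le_sum_of_subset_of_nonneg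
    · apply Finset.filter_subset_filter
      intro x hx
      exact Finset.mem_range.2 (Finset.mem_Ico.1 hx).2
    · intro p hp _
      have : (1:ℝ) ≤ p := by exact_mod_cast (Finset.mem_filter.1 hp).2.one_le
      exact mul_nonneg (by positivity) (by linarith)
  refine le_trans ?_ ((Finset.sum_le_sum hterm).trans hsub)
  rw [← Finset.mul_sum, ← hsplit]
  have hw := ww_nonneg k n
  calc (1 / 8 : ℝ) ^ (k + 1) * (1 / 10) * n * ww k n
      = (1 / 8 : ℝ) ^ (k + 1) * ww k n * (n / 10) := by ring
    _ ≤ _ := by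
      apply mul_le_mul_of_nonneg_left _ (by positivity)
      linarith

theorem ratio_tendsto (k : ℕ) :
    Tendsto (fun n : ℕ => numP k n / denP k n) atTop (nhds artinConstant) := by
  obtain ⟨c, hc, hden⟩ := den_lower k
  rw [Metric.tendsto_nhds]
  intro δ hδ
  obtain ⟨C, hC, hS⟩ := Sw_bound (c * δ / 8) (by positivity)
  obtain ⟨M, hM⟩ := exists_nat_gt (C / (c * δ / 8))
  filter_upwards [hden, eventually_ge_atTop M, eventually_ge_atTop 2] with n h1 h2 h3
  have hn : (2:ℝ) ≤ n := by exact_mod_cast h3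
  have hw : 0 < ww k n :=
    div_pos (mul_pos (by positivity) (by linarith)) (Real.log_pos (by linarith))
  have hD : 0 < denP k n := lt_of_lt_of_le (by positivity) h1
  have h4 := abel_bound k n (c * δ / 8) C (by positivity) hS
  rw [num_sub] at h4
  have hCn : C ≤ (c * δ / 8) * n := by
    rw [div_lt_iff₀ (by positivity)] at hM
    have : (M:ℝ) ≤ n := by exact_mod_cast h2
    have h5 : (0:ℝ) < c * δ / 8 := by positivity
    nlinarith
  rw [Real.dist_eq, div_sub' hD.ne', abs_div, abs_of_pos hD, div_lt_iff₀ hD, mul_comm (denP k n)]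
  calc _ ≤ _ := h4
    _ ≤ 2 * ww k n * ((c * δ / 8) * n + (c * δ / 8) * n) := by gcongr
    _ = (δ / 2) * (c * n * ww k n) := by ring
    _ ≤ (δ / 2) * denP k n := by gcongr
    _ < δ * denP k n := by nlinarith

lemma sum_nth_prime (f : ℕ → ℝ) (N : ℕ) : ∑ i ∈ Finset.range N, f (Nat.nth Nat.Prime i) =
    ∑ p ∈ (Finset.range (Nat.nth Nat.Prime N)).filter Nat.Prime, f p := by
  induction N with
  | zero =>
    rw [Finset.sum_range_zero, Finset.sum_eq_zero]
    intro p hp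
    obtain ⟨h1, h2⟩ := Finset.mem_filter.1 hp
    rw [Nat.nth_prime_zero_eq_two, Finset.mem_range] at h1
    exact absurd h2.two_le (by omega)
  | succ N ih =>
    rw [Finset.sum_range_succ, ih,
      Nat.filter_range_nth_eq_insert_of_infinite Nat.infinite_setOfPred_prime, Finset.sum_insert,
      add_comm]
    simp

end Final

theorem artin_ratio_formula_weighted (k : ℕ) :
    Tendsto (fun N : ℕ =>
        (∑ i ∈ Finset.range N,
          (Nat.nth Nat.Prime i : ℝ) ^ k * ((Nat.nth Nat.Prime i - 1).totient : ℝ)) /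
        (∑ i ∈ Finset.range N,
          (Nat.nth Nat.Prime i : ℝ) ^ k * ((Nat.nth Nat.Prime i : ℝ) - 1)))
      atTop (nhds artinConstant) := by
  have ht : Tendsto (fun N : ℕ => Nat.nth Nat.Prime N - 1) atTop atTop :=
    (tendsto_sub_atTop_nat 1).comp
      (Nat.nth_strictMono Nat.infinite_setOfPred_prime).tendsto_atTop
  refine ((ratio_tendsto k).comp ht).congr fun N => ?_
  have h1 : Nat.nth Nat.Prime N - 1 + 1 = Nat.nth Nat.Prime N :=
    Nat.sub_add_cancel (Nat.prime_nth_prime N).one_le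
  simp only [Function.comp, numP, denP, h1]
  rw [sum_nth_prime (fun p => (p : ℝ) ^ k * ((p - 1).totient : ℝ)),
    sum_nth_prime (fun p => (p : ℝ) ^ k * ((p : ℝ) - 1))]
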